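/- Suppose g : ℕ → ℂ is multiplicative and satisfies Condition (A) for some complex number κ and Condition (B). Then the Euler product ∏_p (1 − 1/p)^κ (1 + g(p)/p + g(p²)/p² + ⋯) converges; that is, each series ∑_{r=0}^∞ g(p^r)/p^r converges absolutely, and the partial products over primes p ≤ x tend to a (finite) limit as x → ∞. Here (1 − 1/p)^κ = exp(κ log(1 − 1/p)) is the principal-branch power. -/

import Mathlib

open Filter Finset
open scoped ENNReal NNReal

/-- `g` is multiplicative: `g 1 = 1` and `g (m*n) = g m * g n` for coprime `m, n`. -/
def IsMult (g : ℕ → ℂ) : Prop :=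
  g 1 = 1 ∧ ∀ m n : ℕ, Nat.Coprime m n → g (m * n) = g m * g n

/-- `M_g(x) = ∑_{n ≤ x} g(n)/n`. -/
noncomputable def Mg (g : ℕ → ℂ) (x : ℝ) : ℂ :=
  ∑ n ∈ Finset.Icc 1 ⌊x⌋₊, g n / (n : ℂ)

/-- The finite set of primes `p ≤ x`. -/
noncomputable def primesLE (x : ℝ) : Finset ℕ :=
  (Finset.range (⌊x⌋₊ + 1)).filter Nat.Prime

/-- Condition (A): `∑_{p ≤ x} g(p) log p / p = κ log x + O(1)` for all `x ≥ 2`. -/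
def CondA (g : ℕ → ℂ) (κ : ℂ) : Prop :=
  ∃ C : ℝ, ∀ x : ℝ, 2 ≤ x →
    ‖(∑ p ∈ primesLE x, g p * (Real.log p : ℂ) / (p : ℂ)) - κ * (Real.log x : ℂ)‖ ≤ C

/-- Condition (B):
`∑_p (|g(p)| log p / p) ∑_{r≥1} |g(p^r)|/p^r + ∑_p ∑_{r≥2} |g(p^r)| log(p^r)/p^r < ∞`. -/
def CondB (g : ℕ → ℂ) : Prop :=
  (∑' p : Nat.Primes,
      ((‖g (p : ℕ)‖₊ : ℝ≥0∞) * ENNReal.ofReal (Real.log (p : ℕ)) / ((p : ℕ) : ℝ≥0∞)) *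
        ∑' r : ℕ, (‖g ((p : ℕ) ^ (r + 1))‖₊ : ℝ≥0∞) / (((p : ℕ) ^ (r + 1) : ℕ) : ℝ≥0∞))
    + (∑' p : Nat.Primes, ∑' r : ℕ,
        (‖g ((p : ℕ) ^ (r + 2))‖₊ : ℝ≥0∞) *
          ENNReal.ofReal (Real.log ((p : ℕ) ^ (r + 2) : ℕ)) /
          (((p : ℕ) ^ (r + 2) : ℕ) : ℝ≥0∞)) < ⊤

/-- Condition (C): `∏_{p ≤ x} (1 + |g(p)|/p) ≪ (log x)^β` for all `x ≥ 2`. -/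
def CondC (g : ℕ → ℂ) (β : ℝ) : Prop :=
  ∃ C : ℝ, ∀ x : ℝ, 2 ≤ x →
    ∏ p ∈ primesLE x, (1 + ‖g p‖ / (p : ℝ)) ≤ C * Real.log x ^ β

/-- The Euler factor `(1 - 1/p)^κ (1 + g(p)/p + g(p²)/p² + ⋯)` (principal branch power). -/
noncomputable def eulerFactor (g : ℕ → ℂ) (κ : ℂ) (p : ℕ) : ℂ :=
  (1 - 1 / (p : ℂ)) ^ κ * ∑' r : ℕ, g (p ^ r) / (p : ℂ) ^ r

/-!
Write `a p = g p / p` and let `h p` collect the terms of order at least two of the local series at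
`p`. Each Euler factor splits as
`exp ((g p - κ) / p) * exp (κ * (log (1 - 1 / p) + 1 / p)) * (exp (-a p) * (1 + a p + h p))`.
The last two products converge absolutely: the exponent of the first is `O(1 / p ^ 2)`, while
`exp (-a p) * (1 + a p + h p) = 1 + O(‖a p‖ ^ 2 + ‖h p‖)`, and Condition (B) makes `∑ a p ^ 2` and
`∑ h p` absolutely convergent. The series `∑ (g p - κ) / p` may converge only conditionally: by
Condition (A) and Mertens' first theorem the sums of `(g p - κ) * log p / p` are bounded, so
Dirichlet's test with the weights `1 / log p` applies.
-/

open Asymptotics Topology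

section Mertens

lemma log_factorial_eq_sum_primesLE (N : ℕ) :
    Real.log N.factorial =
      ∑ p ∈ Nat.primesLE N, (N.factorial.factorization p : ℝ) * Real.log p := by
  rw [Real.log_nat_eq_sum_factorization]
  refine Finsupp.sum_of_support_subset _ (fun p hp ↦ ?_) _ (by simp)
  have hp' := Nat.prime_of_mem_primeFactors hp
  exact Nat.mem_primesLE.2 ⟨hp'.dvd_factorial.1 (Nat.dvd_of_mem_primeFactors hp), hp'⟩

lemma div_sub_one_le_factorization_factorial {p : ℕ} (hp : p.Prime) (N : ℕ) :
    (N : ℝ) / p - 1 ≤ N.factorial.factorization p := by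
  have hle : N / p ≤ N.factorial.factorization p := by
    rw [Nat.factorization_factorial hp (b := Nat.log p N + 2) (by omega)]
    simpa using single_le_sum (f := fun i ↦ N / p ^ i) (fun _ _ ↦ Nat.zero_le _)
      (mem_Ico.2 ⟨le_rfl, by omega⟩ : 1 ∈ Ico 1 (Nat.log p N + 2))
  calc (N : ℝ) / p - 1 ≤ ⌊(N : ℝ) / p⌋₊ := (Nat.sub_one_lt_floor _).le
    _ = (N / p : ℕ) := by rw [Nat.floor_div_eq_div]
    _ ≤ _ := mod_cast hle

lemma factorization_factorial_le_div_add {p : ℕ} (hp : p.Prime) (N : ℕ) :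
    (N.factorial.factorization p : ℝ) ≤ N / p + 2 * N / p ^ 2 := by
  have hp2 : (2 : ℝ) ≤ p := mod_cast hp.two_le
  calc (N.factorial.factorization p : ℝ)
      ≤ (N / (p - 1) : ℕ) := mod_cast Nat.factorization_factorial_le_div_pred hp N
    _ ≤ N / (p - 1 : ℕ) := Nat.cast_div_le
    _ = N / ((p : ℝ) - 1) := by rw [Nat.cast_pred hp.pos]
    _ = N / p + N / (p * ((p : ℝ) - 1)) := by
      have : (p : ℝ) - 1 ≠ 0 := by linarith
      field_simp
      ring
    _ ≤ N / p + N / (p * (p / 2)) := by gcongr; linarith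
    _ = N / p + 2 * N / p ^ 2 := by field_simp

lemma summable_log_div_rpow {s : ℝ} (hs : 1 < s) :
    Summable fun n : ℕ ↦ Real.log n / (n : ℝ) ^ s := by
  have hlog : (fun n : ℕ ↦ Real.log n) =O[atTop] fun n : ℕ ↦ (n : ℝ) ^ ((s - 1) / 2) :=
    (isLittleO_log_rpow_atTop (by linarith)).isBigO.comp_tendsto tendsto_natCast_atTop_atTop
  refine summable_of_isBigO_nat (g := fun n : ℕ ↦ (n : ℝ) ^ (-(s + 1) / 2))
    (Real.summable_nat_rpow.2 (by linarith)) ?_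
  refine (hlog.mul (isBigO_refl (fun n : ℕ ↦ ((n : ℝ) ^ s)⁻¹) atTop)).congr' (by rfl) ?_
  filter_upwards [eventually_gt_atTop 0] with n hn
  rw [← Real.rpow_neg n.cast_nonneg, ← Real.rpow_add (mod_cast hn)]
  ring_nf

lemma sum_primesLE_log_div_le (N : ℕ) :
    ∑ p ∈ Nat.primesLE N, Real.log p / p ≤ Real.log N + Real.log 4 := by
  rcases N.eq_zero_or_pos with rfl | hN
  · simpa using Real.log_nonneg (by norm_num)
  have hN' : (0 : ℝ) < N := mod_cast hN
  have htheta : ∑ p ∈ Nat.primesLE N, Real.log p ≤ Real.log 4 * N := by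
    rw [← Chebyshev.theta_eq_sum_primesLE_log]
    exact Chebyshev.theta_le_log4_mul_x hN'.le
  have hfactorial : Real.log N.factorial ≤ N * Real.log N := by
    rw [← Real.log_pow]
    exact Real.log_le_log (by positivity) (mod_cast N.factorial_le_pow)
  have hlegendre : N * ∑ p ∈ Nat.primesLE N, Real.log p / p - ∑ p ∈ Nat.primesLE N, Real.log p ≤
      Real.log N.factorial := by
    rw [log_factorial_eq_sum_primesLE, mul_sum, ← sum_sub_distrib]
    refine sum_le_sum fun p hp ↦ ?_
    calc N * (Real.log p / p) - Real.log p = (N / p - 1) * Real.log p := by ring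
      _ ≤ _ := mul_le_mul_of_nonneg_right
        (div_sub_one_le_factorization_factorial (Nat.prime_of_mem_primesLE hp) N)
        (Real.log_natCast_nonneg p)
  refine le_of_mul_le_mul_left ?_ hN'
  linarith

lemma le_sum_primesLE_log_div (N : ℕ) :
    Real.log N - (1 + 2 * ∑' n : ℕ, Real.log n / (n : ℝ) ^ 2) ≤
      ∑ p ∈ Nat.primesLE N, Real.log p / p := by
  have hterm (n : ℕ) : 0 ≤ Real.log n / (n : ℝ) ^ 2 :=
    div_nonneg (Real.log_natCast_nonneg n) (by positivity)
  rcases N.eq_zero_or_pos with rfl | hN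
  · rw [Nat.primesLE_zero, sum_empty, Nat.cast_zero, Real.log_zero]
    linarith [tsum_nonneg (L := .unconditional ℕ) hterm]
  have hN' : (0 : ℝ) < N := mod_cast hN
  have htail : ∑ p ∈ Nat.primesLE N, Real.log p / (p : ℝ) ^ 2 ≤
      ∑' n : ℕ, Real.log n / (n : ℝ) ^ 2 :=
    Summable.sum_le_tsum _ (fun n _ ↦ hterm n)
      (by simpa only [Real.rpow_two] using summable_log_div_rpow one_lt_two)
  have hfactorial : N * Real.log N - N ≤ Real.log N.factorial := by
    have hlog : 0 ≤ Real.log N := Real.log_natCast_nonneg N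
    have hpi : 0 ≤ Real.log (2 * Real.pi) := Real.log_nonneg (by linarith [Real.pi_gt_three])
    linarith [Stirling.le_log_factorial_stirling hN.ne']
  have hlegendre : Real.log N.factorial ≤ N * (∑ p ∈ Nat.primesLE N, Real.log p / p +
      2 * ∑ p ∈ Nat.primesLE N, Real.log p / (p : ℝ) ^ 2) := by
    rw [log_factorial_eq_sum_primesLE, mul_sum, ← sum_add_distrib, mul_sum]
    refine sum_le_sum fun p hp ↦ ?_
    calc _ ≤ ((N : ℝ) / p + 2 * N / p ^ 2) * Real.log p := mul_le_mul_of_nonneg_right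
          (factorization_factorial_le_div_add (Nat.prime_of_mem_primesLE hp) N)
          (Real.log_natCast_nonneg p)
      _ = _ := by ring
  refine le_of_mul_le_mul_left ?_ hN'
  linarith [mul_le_mul_of_nonneg_left htail hN'.le]

theorem exists_abs_sum_primesLE_log_div_sub_log_le :
    ∃ C : ℝ, ∀ N : ℕ, |∑ p ∈ Nat.primesLE N, Real.log p / p - Real.log N| ≤ C :=
  ⟨max (Real.log 4) (1 + 2 * ∑' n : ℕ, Real.log n / (n : ℝ) ^ 2), fun N ↦ abs_sub_le_iff.2
    ⟨le_max_of_le_left (sub_le_iff_le_add'.2 (sum_primesLE_log_div_le N)),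
      le_max_of_le_right (sub_le_comm.1 (le_sum_primesLE_log_div N))⟩⟩

end Mertens

section PrimesBelow

lemma tendsto_prod_primesBelow_of_hasProd {M : Type*} [CommMonoid M] [TopologicalSpace M]
    {f : ℕ → M} {a : M} (hf : HasProd (fun p : Nat.Primes ↦ f p) a) :
    Tendsto (fun N : ℕ ↦ ∏ p ∈ Nat.primesBelow N, f p) atTop (𝓝 a) := by
  simp_rw [Nat.primesBelow, prod_filter]
  exact ((Nat.Primes.hasProd_iff_hasProd_ite f).1 hf).tendsto_prod_nat

-- Truncating at `2` is needed for monotonicity: `(log 0)⁻¹ = (log 1)⁻¹ = 0` in Lean.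
lemma antitone_inv_log_max_two : Antitone fun n : ℕ ↦ (Real.log (max n 2 : ℕ))⁻¹ := by
  intro m n hmn
  have hm : 1 < max m 2 := by omega
  have hlog : 0 < Real.log (max m 2 : ℕ) := Real.log_pos (mod_cast hm)
  dsimp only
  gcongr

lemma tendsto_inv_log_max_two :
    Tendsto (fun n : ℕ ↦ (Real.log (max n 2 : ℕ))⁻¹) atTop (𝓝 0) :=
  (Real.tendsto_log_atTop.comp (tendsto_natCast_atTop_atTop.comp
    (tendsto_atTop_mono (fun n ↦ le_max_left n 2) tendsto_id))).inv_tendsto_atTop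

lemma exists_tendsto_sum_primesBelow_of_bounded_log_smul {E : Type*} [NormedAddCommGroup E]
    [NormedSpace ℝ E] [CompleteSpace E] {f : ℕ → E} {C : ℝ}
    (hf : ∀ N : ℕ, ‖∑ p ∈ Nat.primesBelow N, Real.log p • f p‖ ≤ C) :
    ∃ L : E, Tendsto (fun N : ℕ ↦ ∑ p ∈ Nat.primesBelow N, f p) atTop (𝓝 L) := by
  simp_rw [Nat.primesBelow, sum_filter] at hf ⊢
  have hcauchy :=
    antitone_inv_log_max_two.cauchySeq_series_mul_of_tendsto_zero_of_bounded
      tendsto_inv_log_max_two hf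
  obtain ⟨L, hL⟩ := cauchySeq_tendsto_of_complete hcauchy
  refine ⟨L, hL.congr fun N ↦ sum_congr rfl fun p _ ↦ ?_⟩
  split_ifs with hp
  · have hlog : Real.log p ≠ 0 := (Real.log_pos (mod_cast hp.one_lt)).ne'
    rw [max_eq_left hp.two_le, inv_smul_smul₀ hlog]
  · exact smul_zero _

end PrimesBelow

section RegularizedProduct

variable {ι : Type*} {a h : ι → ℂ}

lemma tendsto_cofinite_zero_of_summable_sq (ha : Summable fun i ↦ a i ^ 2) :
    Tendsto a cofinite (𝓝 0) := by
  rw [tendsto_zero_iff_norm_tendsto_zero]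
  simpa [Real.sqrt_sq] using ha.norm.tendsto_cofinite_zero.sqrt

lemma summable_log_one_add_sub_self (ha : Summable fun i ↦ a i ^ 2) :
    Summable fun i ↦ Complex.log (1 + a i) - a i :=
  summable_of_isBigO ha.norm <| IsBigO.norm_right <|
    Complex.log_sub_self_isBigO.comp_tendsto (tendsto_cofinite_zero_of_summable_sq ha)

lemma summable_log_one_sub_inv_add_inv :
    Summable fun n : ℕ ↦ Complex.log (1 - 1 / n) + 1 / n := by
  have hsq : Summable fun n : ℕ ↦ (-(1 / (n : ℂ))) ^ 2 := .of_norm (by simp)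
  simpa only [← sub_eq_add_neg, sub_neg_eq_add] using summable_log_one_add_sub_self hsq

lemma exp_neg_mul_one_add_sub_one_isBigO :
    (fun z : ℂ ↦ Complex.exp (-z) * (1 + z) - 1) =O[𝓝 0] fun z ↦ z ^ 2 := by
  have hexp : (fun z : ℂ ↦ Complex.exp (-z) - 1 - -z) =O[𝓝 0] fun z ↦ z ^ 2 := by
    refine IsBigO.of_bound 1 ?_
    filter_upwards [Metric.closedBall_mem_nhds (0 : ℂ) one_pos] with z hz
    simpa using Complex.norm_exp_sub_one_sub_id_le (x := -z) (by simpa using hz)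
  have hone : (fun z : ℂ ↦ 1 + z) =O[𝓝 0] fun _ ↦ (1 : ℂ) :=
    (continuous_const.add continuous_id).continuousAt.isBigO_one ℂ
  have hmul : (fun z : ℂ ↦ (Complex.exp (-z) - 1 - -z) * (1 + z)) =O[𝓝 0] fun z ↦ z ^ 2 := by
    simpa only [mul_one] using hexp.mul hone
  exact (hmul.sub (isBigO_refl (fun z : ℂ ↦ z ^ 2) _)).congr_left fun z ↦ by ring

lemma multipliable_exp_neg_mul_one_add_add (ha : Summable fun i ↦ a i ^ 2) (hh : Summable h) :
    Multipliable fun i ↦ Complex.exp (-a i) * (1 + a i + h i) := by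
  have hlim := tendsto_cofinite_zero_of_summable_sq ha
  have hmain : Summable fun i ↦ Complex.exp (-a i) * (1 + a i) - 1 :=
    summable_of_isBigO ha.norm
      (exp_neg_mul_one_add_sub_one_isBigO.comp_tendsto hlim).norm_right
  have hbdd : (fun i ↦ Complex.exp (-a i)) =O[cofinite] fun _ ↦ (1 : ℂ) :=
    hlim.neg.cexp.isBigO_one ℂ
  have hrest : Summable fun i ↦ Complex.exp (-a i) * h i :=
    summable_of_isBigO hh.norm <| IsBigO.norm_right <| by
      simpa only [one_mul] using hbdd.mul (isBigO_refl h cofinite)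
  exact (multipliable_one_add_of_summable (hmain.add hrest).norm).congr fun i ↦ by ring

end RegularizedProduct

section LocalSeries

variable {g : ℕ → ℂ} {κ : ℂ}

/-- The part `∑_{r ≥ 2} g(p^r)/p^r` of the local series of `g` at `p`, which the Euler product
treats as an absolutely summable perturbation of `1 + g(p)/p`. -/
noncomputable def localTail (g : ℕ → ℂ) (p : ℕ) : ℂ :=
  ∑' r : ℕ, g (p ^ (r + 2)) / (p : ℂ) ^ (r + 2)

lemma tsum_local_eq_one_add_add_localTail (hg : g 1 = 1) {p : ℕ}
    (hs : Summable fun r : ℕ ↦ g (p ^ r) / (p : ℂ) ^ r) :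
    ∑' r : ℕ, g (p ^ r) / (p : ℂ) ^ r = 1 + g p / p + localTail g p := by
  rw [← hs.sum_add_tsum_nat_add 2, localTail]
  simp [sum_range_succ, hg]

lemma eulerFactor_eq_exp_mul_exp_mul {p : ℕ} (hp : p.Prime) (hg : g 1 = 1)
    (hs : Summable fun r : ℕ ↦ g (p ^ r) / (p : ℂ) ^ r) :
    eulerFactor g κ p = Complex.exp ((g p - κ) / p) *
      Complex.exp (κ * (Complex.log (1 - 1 / p) + 1 / p)) *
      (Complex.exp (-(g p / p)) * (1 + g p / p + localTail g p)) := by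
  have hne : 1 - 1 / (p : ℂ) ≠ 0 := by
    rw [sub_ne_zero, ne_comm, one_div, inv_ne_one]
    exact mod_cast hp.ne_one
  rw [eulerFactor, tsum_local_eq_one_add_add_localTail hg hs,
    Complex.cpow_def_of_ne_zero hne, ← mul_assoc, ← Complex.exp_add, ← Complex.exp_add]
  congr 2
  ring

lemma exists_norm_sum_primesBelow_log_smul_le_of_condA (hA : CondA g κ) :
    ∃ C : ℝ, ∀ N : ℕ, ‖∑ p ∈ Nat.primesBelow N, Real.log p • ((g p - κ) / p)‖ ≤ C := by
  obtain ⟨C, hC⟩ := hA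
  obtain ⟨D, hD⟩ := exists_abs_sum_primesLE_log_div_sub_log_le
  refine ⟨max 0 (C + ‖κ‖ * D), fun N ↦ ?_⟩
  rcases lt_or_ge (N - 1) 2 with hN | hN
  · rw [Nat.primesBelow_eq_primesLE_sub_one]
    interval_cases N - 1 <;> simp
  refine le_max_of_le_right ?_
  rw [Nat.primesBelow_eq_primesLE_sub_one]
  generalize N - 1 = n at hN
  have hsplit : ∑ p ∈ Nat.primesLE n, Real.log p • ((g p - κ) / p) =
      (∑ p ∈ Nat.primesLE n, g p * (Real.log p : ℂ) / p - κ * (Real.log n : ℂ)) -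
        κ * ((∑ p ∈ Nat.primesLE n, Real.log p / p - Real.log n : ℝ) : ℂ) := by
    simp only [Complex.ofReal_sub, Complex.ofReal_sum, Complex.ofReal_div, Complex.ofReal_natCast]
    rw [mul_sub, sub_sub_sub_cancel_right, mul_sum, ← sum_sub_distrib]
    refine sum_congr rfl fun p _ ↦ ?_
    rw [Complex.real_smul]
    ring
  have hCn : ‖∑ p ∈ Nat.primesLE n, g p * (Real.log p : ℂ) / p - κ * (Real.log n : ℂ)‖ ≤ C := by
    simpa only [primesLE, Nat.floor_natCast] using! hC n (mod_cast hN)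
  rw [hsplit]
  refine (norm_sub_le _ _).trans (add_le_add hCn ?_)
  rw [norm_mul, Complex.norm_real]
  gcongr
  exact hD n

lemma enorm_div_natCast (z : ℂ) {n : ℕ} (hn : n ≠ 0) : ‖z / n‖ₑ = ‖z‖ₑ / n := by
  rw [div_eq_mul_inv, enorm_mul, enorm_inv (Nat.cast_ne_zero.2 hn), div_eq_mul_inv]
  simp [enorm_eq_nnnorm]

lemma summable_sq_div_of_condB (hB : CondB g) :
    Summable fun p : Nat.Primes ↦ (g p / p) ^ 2 := by
  have hlog : ENNReal.ofReal (Real.log 2) ≠ 0 := by simpa using Real.log_pos one_lt_two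
  have hle (p : Nat.Primes) : ENNReal.ofReal (Real.log 2) * ‖(g p / p) ^ 2‖ₑ ≤
      (‖g p‖₊ * ENNReal.ofReal (Real.log p) / (p : ℕ)) *
        ∑' r : ℕ, (‖g (p ^ (r + 1))‖₊ : ℝ≥0∞) / ((p ^ (r + 1) : ℕ) : ℝ≥0∞) := by
    have hp : Real.log 2 ≤ Real.log p := Real.log_le_log two_pos (mod_cast p.2.two_le)
    calc ENNReal.ofReal (Real.log 2) * ‖(g p / p) ^ 2‖ₑ
        ≤ ENNReal.ofReal (Real.log p) * ‖(g p / p) ^ 2‖ₑ := by gcongr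
      _ = (‖g p‖₊ * ENNReal.ofReal (Real.log p) / (p : ℕ)) * (‖g p‖₊ / (p : ℕ)) := by
        rw [enorm_pow, enorm_div_natCast _ p.2.ne_zero, enorm_eq_nnnorm]
        simp only [div_eq_mul_inv]
        ring
      _ ≤ _ := by
        gcongr
        simpa using ENNReal.le_tsum (f := fun r : ℕ ↦
          (‖g (p ^ (r + 1))‖₊ : ℝ≥0∞) / ((p ^ (r + 1) : ℕ) : ℝ≥0∞)) 0
  have hlt := (ENNReal.tsum_le_tsum hle).trans_lt (ENNReal.add_lt_top.1 hB).1
  rw [ENNReal.tsum_mul_left] at hlt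
  exact Summable.of_enorm (ENNReal.lt_top_of_mul_ne_top_right hlt.ne hlog).ne

lemma summable_higher_powers_of_condB (hB : CondB g) :
    Summable fun q : Nat.Primes × ℕ ↦ g (q.1 ^ (q.2 + 2)) / ((q.1 : ℕ) : ℂ) ^ (q.2 + 2) := by
  have hle (p : Nat.Primes) (r : ℕ) : ‖g (p ^ (r + 2)) / ((p : ℕ) : ℂ) ^ (r + 2)‖ₑ ≤
      ‖g (p ^ (r + 2))‖₊ * ENNReal.ofReal (Real.log (p ^ (r + 2) : ℕ)) /
        ((p ^ (r + 2) : ℕ) : ℝ≥0∞) := by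
    have hexp : Real.exp 1 ≤ (p ^ (r + 2) : ℕ) := by
      have hfour : (4 : ℝ) ≤ (p ^ (r + 2) : ℕ) := mod_cast
        (Nat.pow_le_pow_left p.2.two_le 2).trans (Nat.pow_le_pow_right p.2.pos (by omega))
      linarith [Real.exp_one_lt_three]
    have hlog : 1 ≤ ENNReal.ofReal (Real.log (p ^ (r + 2) : ℕ)) := ENNReal.one_le_ofReal.2 <|
      (Real.le_log_iff_exp_le ((Real.exp_pos 1).trans_le hexp)).2 hexp
    rw [← Nat.cast_pow, enorm_div_natCast _ (pow_ne_zero _ p.2.ne_zero), enorm_eq_nnnorm]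
    gcongr
    exact le_mul_of_one_le_right' hlog
  refine Summable.of_enorm (ne_top_of_le_ne_top (ENNReal.add_lt_top.1 hB).2.ne ?_)
  rw [ENNReal.tsum_prod']
  exact ENNReal.tsum_le_tsum fun p ↦ ENNReal.tsum_le_tsum (hle p)

end LocalSeries

theorem stmt16_general (g : ℕ → ℂ) (κ : ℂ) (hg : g 1 = 1) (hA : CondA g κ)
    (hsq : Summable fun p : Nat.Primes ↦ (g p / p) ^ 2)
    (htail : Summable fun q : Nat.Primes × ℕ ↦
      g (q.1 ^ (q.2 + 2)) / ((q.1 : ℕ) : ℂ) ^ (q.2 + 2)) :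
    (∀ p : ℕ, p.Prime → Summable (fun r : ℕ => ‖g (p ^ r)‖ / (p : ℝ) ^ r)) ∧
    ∃ P : ℂ,
      Tendsto (fun N : ℕ => ∏ p ∈ (Finset.range N).filter Nat.Prime, eulerFactor g κ p)
        atTop (nhds P) := by
  have hlocal (p : ℕ) (hp : p.Prime) : Summable fun r : ℕ ↦ g (p ^ r) / (p : ℂ) ^ r :=
    (summable_nat_add_iff 2).1 (htail.prod_factor ⟨p, hp⟩)
  refine ⟨fun p hp ↦ by simpa using (hlocal p hp).norm, ?_⟩
  obtain ⟨C, hC⟩ := exists_norm_sum_primesBelow_log_smul_le_of_condA hA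
  obtain ⟨S, hS⟩ := exists_tendsto_sum_primesBelow_of_bounded_log_smul hC
  have hpow := tendsto_prod_primesBelow_of_hasProd
    (f := fun p ↦ Complex.exp (κ * (Complex.log (1 - 1 / p) + 1 / p)))
    ((summable_log_one_sub_inv_add_inv.comp_injective
      Nat.Primes.coe_nat_injective).mul_left κ).hasSum.cexp
  have hreg := tendsto_prod_primesBelow_of_hasProd
    (f := fun p ↦ Complex.exp (-(g p / p)) * (1 + g p / p + localTail g p))
    (multipliable_exp_neg_mul_one_add_add hsq htail.prod).hasProd
  refine ⟨_, ((hS.cexp.mul hpow).mul hreg).congr fun N ↦ ?_⟩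
  rw [Complex.exp_sum, ← prod_mul_distrib, ← prod_mul_distrib]
  refine prod_congr rfl fun p hp ↦ (eulerFactor_eq_exp_mul_exp_mul ?_ hg (hlocal p ?_)).symm <;>
    exact Nat.prime_of_mem_primesBelow hp

theorem stmt16 (g : ℕ → ℂ) (κ : ℂ) (hg : IsMult g)
    (hA : CondA g κ) (hB : CondB g) :
    (∀ p : ℕ, p.Prime → Summable (fun r : ℕ => ‖g (p ^ r)‖ / (p : ℝ) ^ r)) ∧
    ∃ P : ℂ,
      Tendsto (fun N : ℕ => ∏ p ∈ (Finset.range N).filter Nat.Prime, eulerFactor g κ p)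
        atTop (nhds P) := by
  exact stmt16_general g κ hg.1 hA (summable_sq_div_of_condB hB)
    (summable_higher_powers_of_condB hB)
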